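/- Let k be a field and R a k-subalgebra of an affine domain T over k. Then the Krull dimension of R equals the transcendence degree over k of the fraction field of R. -/

import Mathlib

/-- The transcendence degree of a commutative `k`-algebra `A`: the supremum of the
cardinalities of the subsets of `A` that are algebraically independent over `k`. -/
noncomputable def trdeg (k A : Type*) [CommRing k] [CommRing A] [Algebra k A] : Cardinal :=
  ⨆ s : { s : Set A // AlgebraicIndependent k ((↑) : s → A) }, Cardinal.mk s.1

/-- The `k`-algebra structure on the fraction field of a `k`-algebra `S`, obtained by
composing `k → S → Frac(S)`. -/
noncomputable def fractionRingAlgebra (k S : Type*) [CommRing k] [CommRing S] [Algebra k S] :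
    Algebra k (FractionRing S) :=
  ((algebraMap S (FractionRing S)).comp (algebraMap k S)).toAlgebra

/-- `td(S)`: the transcendence degree over `k` of the fraction field of `S`. -/
noncomputable def fractionFieldTrdeg (k S : Type*) [CommRing k] [CommRing S] [Algebra k S] :
    Cardinal :=
  @trdeg k (FractionRing S) _ _ (fractionRingAlgebra k S)

universe u v

theorem aux_drop {k : Type v} {A B : Type u} [Field k] [CommRing A] [CommRing B]
    [IsDomain A] [IsDomain B] [Algebra k A] [Algebra k B] (f : A →ₐ[k] B)
    (hs : Function.Surjective f) (a : A) (ha : a ≠ 0) (hfa : f a = 0)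
    (hfin : Algebra.trdeg k A < Cardinal.aleph0) :
    (Algebra.trdeg k B).toNat < (Algebra.trdeg k A).toNat := by
  have hle := trdeg_le_of_surjective f hs
  have hB : Algebra.trdeg k B < Cardinal.aleph0 := by
    exact hle.trans_lt hfin
  obtain ⟨s, hx⟩ := exists_isTranscendenceBasis k B
  by_contra hcon
  rw [not_lt] at hcon
  have hcon' : Algebra.trdeg k A ≤ Algebra.trdeg k B := by
    rw [← Cardinal.cast_toNat_of_lt_aleph0 hfin, ← Cardinal.cast_toNat_of_lt_aleph0 hB]
    simpa using hcon
  choose g hg using hs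
  let y : s → A := fun i => g i
  have hy' : (f ∘ y) = ((↑) : s → B) := by ext i; exact hg i
  have hy : AlgebraicIndependent k y := by
    apply AlgebraicIndependent.of_comp f
    rw [hy']; exact hx.1
  have htb : IsTranscendenceBasis k y := by
    apply hy.isTranscendenceBasis_of_trdeg_le hfin
    rw [hx.cardinalMk_eq_trdeg]; exact hcon'
  have := htb.isAlgebraic
  obtain ⟨r, hr0, hr⟩ := (this.1 a).exists_nonzero_dvd (mem_nonZeroDivisors_of_ne_zero ha)
  have hfr : f (r : A) = 0 := by
    obtain ⟨c, hc⟩ := hr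
    have : (r : A) = a * c := hc
    rw [this, map_mul, hfa, zero_mul]
  have hm : (r : A) ∈ (MvPolynomial.aeval (R := k) y).range :=
    (Algebra.adjoin_range_eq_range_aeval k y) ▸ r.2
  obtain ⟨p, hp⟩ := hm
  have hp' : MvPolynomial.aeval y p = (r : A) := hp
  rw [← hp', ← AlgHom.comp_apply, MvPolynomial.comp_aeval] at hfr
  have h0 : p = 0 := by
    apply hx.1
    rw [map_zero, ← hfr]
    exact congrArg (fun z => MvPolynomial.aeval z p) hy'.symm
  apply hr0
  ext
  rw [← hp', h0, map_zero]; rfl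

theorem aux_upper {k A : Type*} [Field k] [CommRing A] [IsDomain A] [Algebra k A]
    (hfin : Algebra.trdeg k A < Cardinal.aleph0) :
    ringKrullDim A ≤ ((Cardinal.toENat (Algebra.trdeg k A) : ℕ∞) : WithBot ℕ∞) := by
  have hq : ∀ P : PrimeSpectrum A, Algebra.trdeg k (A ⧸ P.asIdeal) ≤ Algebra.trdeg k A :=
    fun P => trdeg_le_of_surjective (Ideal.Quotient.mkₐ k P.asIdeal)
      (Ideal.Quotient.mkₐ_surjective k _)
  let F : PrimeSpectrum A → (Fin ((Algebra.trdeg k A).toNat + 1))ᵒᵈ := fun P =>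
    OrderDual.toDual ⟨(Algebra.trdeg k (A ⧸ P.asIdeal)).toNat,
      Nat.lt_succ_of_le (Cardinal.toNat_le_toNat (hq P) hfin)⟩
  have hF : StrictMono F := by
    intro P Q hPQ
    have hle : P.asIdeal ≤ Q.asIdeal := hPQ.le
    obtain ⟨a, haQ, haP⟩ := Set.exists_of_ssubset (show (P.asIdeal : Set A) ⊂ Q.asIdeal from hPQ)
    change (⟨_, _⟩ : Fin _) < ⟨_, _⟩
    rw [Fin.mk_lt_mk]
    refine aux_drop (Ideal.Quotient.factorₐ k hle) (Ideal.Quotient.factor_surjective hle)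
      (Ideal.Quotient.mk _ a) ?_ ?_ ((hq P).trans_lt hfin)
    · rwa [Ne, Ideal.Quotient.eq_zero_iff_mem]
    · change Ideal.Quotient.mk _ a = 0
      rwa [Ideal.Quotient.eq_zero_iff_mem]
  refine (Order.krullDim_le_of_strictMono F hF).trans ?_
  rw [Order.krullDim_orderDual]
  conv_rhs => rw [← Cardinal.cast_toNat_of_lt_aleph0 hfin]
  refine iSup_le fun l => ?_
  have := l.length_lt_card
  rw [Fintype.card_fin] at this
  simp only [Cardinal.toENat_nat]
  exact_mod_cast Nat.le_of_lt_succ this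

theorem aux_goingup {A B : Type*} [CommRing A] [CommRing B] [Algebra A B] [Algebra.IsIntegral A B]
    (hinj : Function.Injective (algebraMap A B)) : ringKrullDim A ≤ ringKrullDim B := by
  refine iSup_le fun l => ?_
  have : FaithfulSMul A B := (faithfulSMul_iff_algebraMap_injective A B).mpr hinj
  obtain ⟨Q, -, hQ₁, hQ₂⟩ := Ideal.exists_ideal_over_prime_of_isIntegral l.head.asIdeal (⊥ : Ideal B)
    (by simp [Ideal.comap_bot_of_injective _ hinj])
  have : Q.LiesOver (RelSeries.head l).asIdeal := ⟨hQ₂.symm⟩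
  obtain ⟨L, hL, -⟩ := Ideal.exists_ltSeries_of_hasGoingUp l Q
  rw [← hL]
  exact le_iSup (fun p : LTSeries (PrimeSpectrum B) => (p.length : WithBot ℕ∞)) L

theorem aux_affine {k B : Type*} [Field k] [CommRing B] [IsDomain B] [Algebra k B]
    [Algebra.FiniteType k B] :
    ((Cardinal.toENat (Algebra.trdeg k B) : ℕ∞) : WithBot ℕ∞) ≤ ringKrullDim B := by
  obtain ⟨s, g, hg, hi⟩ := exists_integral_inj_algHom_of_fg k B
  algebraize [g.toRingHom]
  have hg' : Function.Injective (algebraMap (MvPolynomial (Fin s) k) B) := hg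
  have h1 := aux_goingup hg'
  have : FaithfulSMul (MvPolynomial (Fin s) k) B :=
    (faithfulSMul_iff_algebraMap_injective _ _).mpr hg'
  have : IsScalarTower k (MvPolynomial (Fin s) k) B :=
    .of_algebraMap_eq fun x => (g.commutes x).symm
  have h2 := lift_trdeg_add_eq k (MvPolynomial (Fin s) k) B
  rw [trdeg_eq_zero (R := MvPolynomial (Fin s) k) (A := B)] at h2
  have h3 := congrArg Cardinal.toENat h2
  simp at h3
  simp at h1
  rw [← h3, Cardinal.toENat_nat]
  exact h1


open TensorProduct in
theorem aux_field {A T : Type u} [CommRing A] [IsDomain A] [CommRing T] [Algebra A T]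
    [Algebra.FiniteType A T] (hinj : Function.Injective (algebraMap A T)) :
    ∃ (L : Type u) (_ : Field L) (_ : Algebra A L) (_ : T →ₐ[A] L),
      Function.Injective (algebraMap A L) ∧ Algebra.IsAlgebraic A L := by
  let K := FractionRing A
  let M := K ⊗[A] T
  have : Module.Flat A K := IsLocalization.flat K (nonZeroDivisors A)
  have hKM : Function.Injective (algebraMap K M) :=
    Algebra.TensorProduct.includeLeft_injective (S := A) hinj
  have : Nontrivial M := hKM.nontrivial
  obtain ⟨m, hm⟩ := Ideal.exists_maximal M
  let : Field (M ⧸ m) := Ideal.Quotient.field m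
  have : Algebra.FiniteType K (M ⧸ m) :=
    Algebra.FiniteType.of_surjective (Ideal.Quotient.mkₐ K m) (Ideal.Quotient.mkₐ_surjective K m)
  have : Module.Finite K (M ⧸ m) := finite_of_finite_type_of_isJacobsonRing K (M ⧸ m)
  refine ⟨M ⧸ m, inferInstance, inferInstance,
    (Ideal.Quotient.mkₐ A m).comp Algebra.TensorProduct.includeRight, ?_, ?_⟩
  · rw [IsScalarTower.algebraMap_eq A K (M ⧸ m)]
    exact (algebraMap K (M ⧸ m)).injective.comp (IsFractionRing.injective A K)
  · have : Algebra.IsAlgebraic A K := IsLocalization.isAlgebraic K (nonZeroDivisors A)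
    have : Algebra.IsAlgebraic K (M ⧸ m) := Algebra.IsAlgebraic.of_finite K (M ⧸ m)
    exact Algebra.IsAlgebraic.trans A K (M ⧸ m)

theorem aux_lower {k : Type v} {A T : Type u} [Field k] [CommRing A] [IsDomain A] [CommRing T]
    [Algebra k A] [Algebra k T] [Algebra A T] [IsScalarTower k A T]
    [Algebra.FiniteType k T] (hinj : Function.Injective (algebraMap A T)) :
    ((Cardinal.toENat (Algebra.trdeg k A) : ℕ∞) : WithBot ℕ∞) ≤ ringKrullDim A := by
  have : Algebra.FiniteType A T := .of_restrictScalars_finiteType k A T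
  obtain ⟨L, _, _, φ, hL, hLalg⟩ := aux_field hinj
  let : Algebra k L := ((algebraMap A L).comp (algebraMap k A)).toAlgebra
  have : IsScalarTower k A L := .of_algebraMap_eq fun x => rfl
  let φ' : T →ₐ[k] L := φ.restrictScalars k
  have hfg : φ'.range.FG := by
    rw [← Algebra.map_top]
    exact (Algebra.FiniteType.out : (⊤ : Subalgebra k T).FG).map φ'
  obtain ⟨s, hs⟩ := hfg
  obtain ⟨f, hf0, hf⟩ := Algebra.IsAlgebraic.exists_integral_multiples (R := A) s
  have hfL : algebraMap A L f ≠ 0 := by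
    rw [Ne, map_eq_zero_iff _ hL]; exact hf0
  let S : Set L := insert (algebraMap A L f)⁻¹ (s : Set L)
  have hSfin : S.Finite := s.finite_toSet.insert _
  let B : Subalgebra k L := Algebra.adjoin k S
  have hBft : Algebra.FiniteType k B :=
    (Subalgebra.fg_iff_finiteType _).mp (Subalgebra.fg_def.mpr ⟨S, hSfin, rfl⟩)
  have hAB : ∀ a : A, IsScalarTower.toAlgHom k A L a ∈ B := by
    intro a
    have : Algebra.adjoin k (s : Set L) ≤ B := Algebra.adjoin_mono (Set.subset_insert _ _)
    apply this
    rw [hs]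
    exact ⟨algebraMap A T a, φ.commutes a⟩
  let ψ : A →ₐ[k] B := (IsScalarTower.toAlgHom k A L).codRestrict B hAB
  let : Algebra A B := ψ.toRingHom.toAlgebra
  have : IsScalarTower A B L := .of_algebraMap_eq fun x => rfl
  have hψ : Function.Injective ψ := fun x y h => hL (congrArg Subtype.val h)
  have hint : ∀ b ∈ B, ∃ n : ℕ, IsIntegral A ((algebraMap A L f) ^ n * b) := by
    intro b hb
    induction hb using Algebra.adjoin_induction with
    | mem x hx =>
      refine ⟨1, ?_⟩
      rcases hx with rfl | hx
      · rw [pow_one, mul_inv_cancel₀ hfL]; exact isIntegral_one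
      · rw [pow_one, ← Algebra.smul_def]; exact hf x hx
    | algebraMap r =>
      refine ⟨0, ?_⟩
      rw [pow_zero, one_mul]
      exact isIntegral_algebraMap (R := A) (x := algebraMap k A r)
    | add x y _ _ hx hy =>
      obtain ⟨n, hn⟩ := hx
      obtain ⟨m, hm⟩ := hy
      refine ⟨n + m, ?_⟩
      have hi : IsIntegral A (algebraMap A L f) := isIntegral_algebraMap
      have := ((hi.pow m).mul hn).add ((hi.pow n).mul hm)
      have e : algebraMap A L f ^ (n + m) * (x + y) = algebraMap A L f ^ m *
        (algebraMap A L f ^ n * x) + algebraMap A L f ^ n * (algebraMap A L f ^ m * y) := by ring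
      rw [e]
      exact this
    | mul x y _ _ hx hy =>
      obtain ⟨n, hn⟩ := hx
      obtain ⟨m, hm⟩ := hy
      refine ⟨n + m, ?_⟩
      have e : algebraMap A L f ^ (n + m) * (x * y) = (algebraMap A L f ^ n * x) *
        (algebraMap A L f ^ m * y) := by ring
      rw [e]
      exact hn.mul hm
  have hunit : IsUnit (algebraMap A B f) := by
    have hmem : (algebraMap A L f)⁻¹ ∈ B := Algebra.subset_adjoin (Set.mem_insert _ _)
    refine IsUnit.of_mul_eq_one ⟨_, hmem⟩ ?_
    ext
    exact mul_inv_cancel₀ hfL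
  have hmono : StrictMono (PrimeSpectrum.comap (algebraMap A B)) := by
    intro P Q hPQ
    obtain ⟨b, hbQ, hbP⟩ := Set.exists_of_ssubset (show (P.asIdeal : Set B) ⊂ Q.asIdeal from hPQ)
    obtain ⟨n, hn⟩ := hint b b.2
    have hn' : IsIntegral A ((algebraMap A B f) ^ n * b) := by
      rw [← isIntegral_algebraMap_iff (B := L) (Subtype.val_injective : Function.Injective (algebraMap B L))]
      exact hn
    refine Ideal.comap_lt_comap_of_integral_mem_sdiff (show P.asIdeal ≤ Q.asIdeal from hPQ.le)
      ⟨Ideal.mul_mem_left _ _ hbQ, ?_⟩ hn'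
    intro h
    exact hbP ((Ideal.unit_mul_mem_iff_mem _ (hunit.pow n)).mp h)
  have h1 : ringKrullDim B ≤ ringKrullDim A := Order.krullDim_le_of_strictMono _ hmono
  refine le_trans ?_ ((aux_affine (k := k) (B := B)).trans h1)
  have := Cardinal.toENat.monotone' (trdeg_le_of_injective ψ hψ)
  exact_mod_cast this



/-- Let `k` be a field and `R` a `k`-subalgebra of an affine domain `T` over `k`.  Then
the Krull dimension of `R` equals the transcendence degree over `k` of the fraction
field of `R`. -/
theorem ringKrullDim_eq_trdeg_of_subalgebra_of_affine
    {k T : Type*} [Field k] [CommRing T] [IsDomain T] [Algebra k T]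
    [Algebra.FiniteType k T] (R : Subalgebra k T) :
    ringKrullDim R = ((Cardinal.toENat (fractionFieldTrdeg k R) : ℕ∞) : WithBot ℕ∞) := by
  have h1 : fractionFieldTrdeg k R = Algebra.trdeg k (FractionRing R) := by
    have : fractionRingAlgebra k R = (inferInstance : Algebra k (FractionRing R)) := by
      apply Algebra.algebra_ext
      intro r
      exact (IsScalarTower.algebraMap_apply k R (FractionRing R) r).symm
    unfold fractionFieldTrdeg
    rw [this]
    rfl
  have h2 : Algebra.trdeg k (FractionRing R) = Algebra.trdeg k R := by
    have : Algebra.IsAlgebraic R (FractionRing R) :=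
      IsLocalization.isAlgebraic (FractionRing R) (nonZeroDivisors R)
    have := trdeg_add_eq k R (A := FractionRing R)
    rw [trdeg_eq_zero (R := R) (A := FractionRing R), add_zero] at this
    exact this.symm
  have hfin : Algebra.trdeg k R < Cardinal.aleph0 :=
    (trdeg_le_of_injective R.val Subtype.val_injective).trans_lt
      trdeg_lt_aleph0_of_finiteType
  rw [h1, h2]
  exact le_antisymm (aux_upper hfin) (aux_lower (T := T) Subtype.val_injective)
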